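/- Let n ≥ 1 and let φ : ℝⁿ → ℝ be twice continuously differentiable. Let K ⊂ ℝⁿ be compact, let {x_k} ⊂ K, suppose the Hessian ∇²φ(x_k) is invertible for every k with ‖(∇²φ(x_k))⁻¹‖ ≤ c in operator norm for some c > 0, let {g_k} ⊂ ℝⁿ be bounded, and let {η_k} be positive reals with lim_{k→∞} η_k = 0. Define x_k⁺ = x_k − η_k (∇²φ(x_k))⁻¹ g_k. Then lim_{k→∞} ‖ g_k + (∇φ(x_k⁺) − ∇φ(x_k))/η_k ‖ = 0. -/

import Mathlib

open Filter Topology Metric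

/-- The Hessian of `φ` at `x`, viewed as a continuous linear map (the Fréchet derivative
of the gradient map). -/
noncomputable def hess {n : ℕ} (φ : EuclideanSpace ℝ (Fin n) → ℝ)
    (x : EuclideanSpace ℝ (Fin n)) :
    EuclideanSpace ℝ (Fin n) →L[ℝ] EuclideanSpace ℝ (Fin n) :=
  fderiv ℝ (gradient φ) x

/-- Hessian-preconditioned steps inexactly solve the Bregman
subproblem: for `φ` of class `C²`, iterates `x_k` in a compact set with uniformly
bounded Hessian inverses, bounded `g_k` and stepsizes `η_k → 0`, the points
`x_k⁺ = x_k − η_k (∇²φ(x_k))⁻¹ g_k` satisfy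
`‖g_k + (∇φ(x_k⁺) − ∇φ(x_k))/η_k‖ → 0`. -/
theorem stmt12 (n : ℕ) (hn : 1 ≤ n)
    (φ : EuclideanSpace ℝ (Fin n) → ℝ) (hφ : ContDiff ℝ 2 φ)
    (K : Set (EuclideanSpace ℝ (Fin n))) (hK : IsCompact K)
    (x : ℕ → EuclideanSpace ℝ (Fin n)) (hxK : ∀ k, x k ∈ K)
    (hinv : ∀ k, IsUnit (hess φ (x k)))
    (c : ℝ) (hc : 0 < c) (hinvbd : ∀ k, ‖(hess φ (x k)).inverse‖ ≤ c)
    (g : ℕ → EuclideanSpace ℝ (Fin n)) (hgbd : Bornology.IsBounded (Set.range g))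
    (η : ℕ → ℝ) (hηpos : ∀ k, 0 < η k) (hη0 : Tendsto η atTop (nhds 0)) :
    Tendsto (fun k =>
        ‖g k + (η k)⁻¹ •
            (gradient φ (x k - η k • (hess φ (x k)).inverse (g k)) -
              gradient φ (x k))‖) atTop (nhds 0) := by
  set F := gradient φ with hF
  have hF1 : ContDiff ℝ 1 F := by
    have h1 : ContDiff ℝ 1 (fderiv ℝ φ) := hφ.fderiv_right (by norm_num)
    exact (InnerProductSpace.toDual ℝ (EuclideanSpace ℝ (Fin n))).symm.contDiff.comp h1
  have hFd : Differentiable ℝ F := hF1.differentiable (by norm_num)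
  have hFc : Continuous (fderiv ℝ F) := hF1.continuous_fderiv (by norm_num)
  obtain ⟨M, hM⟩ := hgbd.exists_norm_le
  have hgM : ∀ k, ‖g k‖ ≤ M := fun k => hM _ ⟨k, rfl⟩
  have hM0 : 0 ≤ M := (norm_nonneg _).trans (hgM 0)
  set d : ℕ → EuclideanSpace ℝ (Fin n) := fun k => (hess φ (x k)).inverse (g k) with hd
  have hdb : ∀ k, ‖d k‖ ≤ c * M := fun k =>
    (ContinuousLinearMap.le_opNorm _ _).trans
      (mul_le_mul (hinvbd k) (hgM k) (norm_nonneg _) hc.le)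
  have hHd : ∀ k, fderiv ℝ F (x k) (d k) = g k := by
    intro k
    have h : hess φ (x k) * Ring.inverse (hess φ (x k)) = 1 :=
      Ring.mul_inverse_cancel _ (hinv k)
    rw [ContinuousLinearMap.ringInverse_eq_inverse] at h
    exact congrArg (fun L : EuclideanSpace ℝ (Fin n) →L[ℝ] EuclideanSpace ℝ (Fin n) => L (g k)) h
  rw [Metric.tendsto_atTop]
  intro ε hε
  have hC : 0 < c * M + 1 := by positivity
  have hε' : 0 < ε / (c * M + 1) := by positivity
  have hu := hK.uniformContinuousAt_of_continuousAt (fderiv ℝ F)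
    (fun a _ => hFc.continuousAt) (Metric.dist_mem_uniformity hε')
  obtain ⟨δ, hδ, hδu⟩ := Metric.mem_uniformity_dist.1 hu
  obtain ⟨N, hN⟩ := Metric.tendsto_atTop.1 hη0 (δ / (c * M + 1)) (by positivity)
  refine ⟨N, fun k hk => ?_⟩
  have hηk := hηpos k
  have hηN : η k * (c * M + 1) < δ := by
    have := hN k hk
    rw [Real.dist_eq, sub_zero, abs_of_pos hηk, lt_div_iff₀ hC] at this
    exact this
  have hstep : ‖η k • d k‖ < δ := by
    rw [norm_smul, Real.norm_of_nonneg hηk.le]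
    have := mul_le_mul_of_nonneg_left (hdb k) hηk.le
    linarith
  have key : ‖F (x k - η k • d k) - F (x k) - fderiv ℝ F (x k) (x k - η k • d k - x k)‖
      ≤ ε / (c * M + 1) * ‖x k - η k • d k - x k‖ := by
    refine (convex_ball (x k) δ).norm_image_sub_le_of_norm_fderiv_le' (𝕜 := ℝ)
      (fun y _ => hFd y) (fun y hy => ?_) (mem_ball_self hδ) ?_
    · have h := hδu (a := x k) (b := y) (by rw [dist_comm]; exact hy) (hxK k)
      have h' : dist (fderiv ℝ F (x k)) (fderiv ℝ F y) < ε / (c * M + 1) := h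
      rw [dist_comm, dist_eq_norm] at h'
      exact h'.le
    · rw [mem_ball, dist_eq_norm, sub_sub_cancel_left, norm_neg]
      exact hstep
  rw [sub_sub_cancel_left, map_neg, map_smul, hHd, norm_neg, norm_smul,
    Real.norm_of_nonneg hηk.le, sub_neg_eq_add] at key
  have e : g k + (η k)⁻¹ • (F (x k - η k • d k) - F (x k))
      = (η k)⁻¹ • (F (x k - η k • d k) - F (x k) + η k • g k) := by
    rw [smul_add, smul_smul, inv_mul_cancel₀ hηk.ne', one_smul, add_comm]
  rw [Real.dist_eq, sub_zero, abs_norm]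
  change ‖g k + (η k)⁻¹ • (F (x k - η k • d k) - F (x k))‖ < ε
  rw [e, norm_smul, norm_inv, Real.norm_of_nonneg hηk.le, inv_mul_lt_iff₀ hηk]
  refine key.trans_lt ?_
  have h3 : ε / (c * M + 1) * (η k * ‖d k‖) = η k * (ε * ‖d k‖ / (c * M + 1)) := by ring
  rw [h3]
  refine mul_lt_mul_of_pos_left ?_ hηk
  rw [div_lt_iff₀ hC]
  exact mul_lt_mul_of_pos_left (by linarith [hdb k]) hε
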